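/- Let X ∈ ℝ^d be an SG_d(σ²) random vector, let k ≤ d, and let U = (u_1,…,u_k) ∈ ℝ^{d×k} be a (possibly random) matrix with orthonormal columns that is independent of X. Then for every t > 0, P( ‖UUᵀX‖² ≥ σ²(k + 2√(kt) + 2t) ) ≤ e^{−t}. -/

import Mathlib

open Matrix MeasureTheory ProbabilityTheory
open scoped BigOperators ENNReal NNReal

noncomputable section

/-- Euclidean norm of a vector in `Fin p → ℝ`. -/
def vnorm {p : ℕ} (x : Fin p → ℝ) : ℝ := Real.sqrt (∑ i, (x i) ^ 2)

/-- Frobenius norm of a real matrix. -/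
def fnorm {m n : ℕ} (A : Matrix (Fin m) (Fin n) ℝ) : ℝ :=
  Real.sqrt (∑ i, ∑ j, (A i j) ^ 2)

/-- Operator (spectral) norm of a real matrix. -/
def opnorm {m n : ℕ} (A : Matrix (Fin m) (Fin n) ℝ) : ℝ :=
  ‖LinearMap.toContinuousLinearMap (Matrix.toEuclideanLin A)‖

/-- A (full) singular value decomposition of a real `p × n` matrix `A`:
`A = U D Vᵀ` with `U, V` orthogonal and `D` the rectangular diagonal matrix with the
nonincreasing nonnegative singular values `sv 0 ≥ sv 1 ≥ ⋯` on the diagonal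
(0-indexed, so the math `σ_i` is `sv (i-1)`), extended by zero beyond `min p n`. -/
structure SVDData (p n : ℕ) (A : Matrix (Fin p) (Fin n) ℝ) where
  U : Matrix (Fin p) (Fin p) ℝ
  V : Matrix (Fin n) (Fin n) ℝ
  sv : ℕ → ℝ
  hU : Uᵀ * U = 1
  hV : Vᵀ * V = 1
  sv_anti : ∀ i j : ℕ, i ≤ j → sv j ≤ sv i
  sv_nonneg : ∀ i, 0 ≤ sv i
  sv_zero : ∀ j, min p n ≤ j → sv j = 0
  decomp : A = U * (Matrix.of fun (i : Fin p) (j : Fin n) => if (i : ℕ) = (j : ℕ) then sv (i : ℕ) else 0) * Vᵀ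

/-- Projection matrix `U_{1:r} U_{1:r}ᵀ` onto the span of the first `r` columns of `U`. -/
def projr {p : ℕ} (U : Matrix (Fin p) (Fin p) ℝ) (r : ℕ) : Matrix (Fin p) (Fin p) ℝ :=
  Matrix.of fun i j => ∑ l : Fin p, if (l : ℕ) < r then U i l * U j l else 0

/-- The `l`-th (0-indexed) column of a matrix, as a vector. -/
def matCol {p q : ℕ} (U : Matrix (Fin p) (Fin q) ℝ) (l : ℕ) : Fin p → ℝ :=
  fun i => if h : l < q then U i ⟨l, h⟩ else 0

/-- `β` for a cluster assignment: `(k/n) ·` (size of the smallest cluster),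
so that `β·n/k` is the size of the smallest cluster. -/
def betaMin (n k : ℕ) (z : Fin n → Fin k) : ℝ :=
  ((k : ℝ) / n) * ⨅ a : Fin k, ((Finset.univ.filter fun i => z i = a).card : ℝ)

/-- Minimum pairwise distance between the centers. -/
def Delta {p k : ℕ} (θ : Fin k → Fin p → ℝ) : ℝ :=
  ⨅ q : {q : Fin k × Fin k // q.1 ≠ q.2}, vnorm (fun i => θ q.1.1 i - θ q.1.2 i)

/-- Misclustering error `ℓ(z, z*)`. -/
def miscl {n k : ℕ} (z zs : Fin n → Fin k) : ℝ :=
  (⨅ φ : Equiv.Perm (Fin k), ((Finset.univ.filter fun i => z i ≠ φ (zs i)).card : ℝ)) / n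

/-- `(z, c)` is a global minimizer of the k-means objective for the columns of `W * X`. -/
def IsKMeans {p n k : ℕ} (W : Matrix (Fin p) (Fin p) ℝ) (X : Matrix (Fin p) (Fin n) ℝ)
    (z : Fin n → Fin k) (c : Fin k → Fin p → ℝ) : Prop :=
  ∀ (z' : Fin n → Fin k) (c' : Fin k → Fin p → ℝ),
    ∑ i, ∑ a, (W.mulVec (fun b => X b i) a - c (z i) a) ^ 2 ≤
      ∑ i, ∑ a, (W.mulVec (fun b => X b i) a - c' (z' i) a) ^ 2

/-- Scalar sub-Gaussian with variance proxy `σ2`: the moment generating function of `X`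
exists and satisfies `E exp(tX) ≤ exp(σ2 t²/2)` for all `t`. -/
def IsSG {Ω : Type*} [MeasurableSpace Ω] (μ : Measure Ω) (X : Ω → ℝ) (σ2 : ℝ) : Prop :=
  ∀ t : ℝ, Integrable (fun ω => Real.exp (t * X ω)) μ ∧
    ∫ ω, Real.exp (t * X ω) ∂μ ≤ Real.exp (σ2 * t ^ 2 / 2)

/-- Vector sub-Gaussian with variance proxy `σ2`: every unit-vector projection is `SG(σ2)`. -/
def IsSGVec {Ω : Type*} [MeasurableSpace Ω] (μ : Measure Ω) {p : ℕ}
    (X : Ω → Fin p → ℝ) (σ2 : ℝ) : Prop :=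
  ∀ u : Fin p → ℝ, vnorm u = 1 → IsSG μ (fun ω => ∑ i, u i * X ω i) σ2


lemma pi_lint {k : ℕ} (f : Fin k → ℝ → ℝ) (hf : ∀ i x, 0 ≤ f i x)
    (hi : ∀ i, Integrable (f i) (gaussianReal 0 1)) :
    ∫⁻ g, ENNReal.ofReal (∏ i, f i (g i)) ∂(Measure.pi fun _ : Fin k => gaussianReal 0 1)
      = ENNReal.ofReal (∏ i, ∫ x, f i x ∂(gaussianReal 0 1)) := by
  rw [← ofReal_integral_eq_lintegral_ofReal]
  · rw [integral_fintype_prod_eq_prod]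
  · exact Integrable.fintype_prod hi
  · exact Filter.Eventually.of_forall fun g => Finset.prod_nonneg fun i _ => hf i _

lemma gauss_lin {k : ℕ} (y : Fin k → ℝ) :
    ∫⁻ g, ENNReal.ofReal (Real.exp (∑ i, y i * g i))
      ∂(Measure.pi fun _ : Fin k => gaussianReal 0 1)
      = ENNReal.ofReal (Real.exp (∑ i, y i ^ 2 / 2)) := by
  simp_rw [Real.exp_sum]
  rw [pi_lint (fun i x => Real.exp (y i * x)) (fun _ _ => (Real.exp_pos _).le)
    (fun i => integrable_exp_mul_gaussianReal _)]
  congr 2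
  ext i
  have := congrFun (mgf_fun_id_gaussianReal (μ := 0) (v := 1)) (y i)
  simpa [mgf] using this

lemma gauss_sq1 (s : ℝ) (hs : s < 1) :
    Integrable (fun x => Real.exp (s / 2 * x ^ 2)) (gaussianReal 0 1) ∧
    ∫ x, Real.exp (s / 2 * x ^ 2) ∂(gaussianReal 0 1) = Real.sqrt (1 / (1 - s)) := by
  have hb : 0 < (1 - s) / 2 := by linarith
  have key : ∀ x : ℝ, gaussianPDFReal 0 1 x * Real.exp (s / 2 * x ^ 2)
      = (Real.sqrt (2 * Real.pi))⁻¹ * Real.exp (-((1 - s) / 2) * x ^ 2) := by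
    intro x
    rw [gaussianPDFReal, mul_assoc, ← Real.exp_add]
    simp
    left
    ring_nf
  constructor
  · rw [gaussianReal_of_var_ne_zero _ one_ne_zero,
      integrable_withDensity_iff (measurable_gaussianPDF _ _)
        (Filter.Eventually.of_forall fun x => gaussianPDF_lt_top)]
    refine ((integrable_exp_neg_mul_sq hb).const_mul (Real.sqrt (2 * Real.pi))⁻¹).congr
      (Filter.Eventually.of_forall fun x => ?_)
    simp only [toReal_gaussianPDF]
    rw [← key, mul_comm]
  · rw [integral_gaussianReal_eq_integral_smul one_ne_zero]
    simp_rw [smul_eq_mul, key]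
    rw [integral_const_mul, integral_gaussian, ← Real.sqrt_inv, ← Real.sqrt_mul (by positivity)]
    congr 1
    have : 1 - s ≠ 0 := by linarith
    field_simp

lemma gauss_sq {k : ℕ} (s : ℝ) (hs : s < 1) :
    ∫⁻ g, ENNReal.ofReal (Real.exp (∑ i, s / 2 * g i ^ 2))
      ∂(Measure.pi fun _ : Fin k => gaussianReal 0 1)
      = ENNReal.ofReal (Real.sqrt (1 / (1 - s)) ^ k) := by
  simp_rw [Real.exp_sum]
  rw [pi_lint (fun i x => Real.exp (s / 2 * x ^ 2)) (fun _ _ => (Real.exp_pos _).le)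
    (fun i => (gauss_sq1 s hs).1)]
  simp [(gauss_sq1 s hs).2]

lemma sgvec_lint {Ω : Type} [MeasurableSpace Ω] (μ : Measure Ω) [IsProbabilityMeasure μ]
    {d : ℕ} (σ2 : ℝ) (X : Ω → Fin d → ℝ) (hsg : IsSGVec μ X σ2) (v : Fin d → ℝ) :
    ∫⁻ ω, ENNReal.ofReal (Real.exp (∑ i, v i * X ω i)) ∂μ
      ≤ ENNReal.ofReal (Real.exp (σ2 * (∑ i, v i ^ 2) / 2)) := by
  have hn : 0 ≤ ∑ i, v i ^ 2 := Finset.sum_nonneg fun i _ => sq_nonneg _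
  by_cases h0 : ∑ i, v i ^ 2 = 0
  · have hv : ∀ i, v i = 0 := fun i => by
      have := (Finset.sum_eq_zero_iff_of_nonneg (fun i _ => sq_nonneg (v i))).1 h0 i
        (Finset.mem_univ i)
      exact pow_eq_zero_iff (two_ne_zero) |>.1 this
    simp [hv]
  · have hpos : 0 < ∑ i, v i ^ 2 := lt_of_le_of_ne hn (Ne.symm h0)
    set r := Real.sqrt (∑ i, v i ^ 2) with hr
    have hrp : 0 < r := Real.sqrt_pos.2 hpos
    have hr2 : r ^ 2 = ∑ i, v i ^ 2 := Real.sq_sqrt hn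
    have hu : vnorm (fun i => v i / r) = 1 := by
      simp only [vnorm, div_pow]
      rw [← Finset.sum_div, ← hr2, div_self (by positivity), Real.sqrt_one]
    obtain ⟨h1, h2⟩ := hsg _ hu r
    have e : ∀ ω, r * ∑ i, v i / r * X ω i = ∑ i, v i * X ω i := by
      intro ω
      rw [Finset.mul_sum]
      refine Finset.sum_congr rfl fun i _ => ?_
      field_simp
    simp_rw [e] at h1 h2
    rw [← ofReal_integral_eq_lintegral_ofReal h1
      (Filter.Eventually.of_forall fun _ => (Real.exp_pos _).le), ← hr2]
    exact ENNReal.ofReal_le_ofReal h2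

lemma norm_proj {d k : ℕ} (U : Fin d → Fin k → ℝ)
    (horth : (Matrix.of U)ᵀ * Matrix.of U = 1) (x : Fin d → ℝ) :
    vnorm ((Matrix.of U * (Matrix.of U)ᵀ).mulVec x) ^ 2 = ∑ j, (∑ i, U i j * x i) ^ 2 := by
  have a : ∀ y : Fin k → ℝ, ∑ i, ((Matrix.of U).mulVec y i) ^ 2 = ∑ j, y j ^ 2 := by
    intro y
    have : (Matrix.of U).mulVec y ⬝ᵥ (Matrix.of U).mulVec y = y ⬝ᵥ y := by
      rw [Matrix.dotProduct_mulVec, Matrix.vecMul_mulVec, horth, Matrix.vecMul_one]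
    simpa [dotProduct, sq] using this
  rw [vnorm, Real.sq_sqrt (Finset.sum_nonneg fun i _ => sq_nonneg _), ← Matrix.mulVec_mulVec, a]
  rfl

lemma norm_emb {d k : ℕ} (U : Fin d → Fin k → ℝ)
    (horth : (Matrix.of U)ᵀ * Matrix.of U = 1) (y : Fin k → ℝ) :
    ∑ i, (∑ j, U i j * y j) ^ 2 = ∑ j, y j ^ 2 := by
  have : (Matrix.of U).mulVec y ⬝ᵥ (Matrix.of U).mulVec y = y ⬝ᵥ y := by
    rw [Matrix.dotProduct_mulVec, Matrix.vecMul_mulVec, horth, Matrix.vecMul_one]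
  simpa [dotProduct, sq, Matrix.mulVec] using this

lemma indep_lint {Ω A B : Type} [MeasurableSpace Ω] [MeasurableSpace A] [MeasurableSpace B]
    (μ : Measure Ω) [IsProbabilityMeasure μ] (U : Ω → A) (X : Ω → B) (hU : Measurable U)
    (hX : Measurable X) (h : IndepFun U X μ) (F : A → B → ℝ≥0∞)
    (hF : Measurable (Function.uncurry F)) :
    ∫⁻ ω, F (U ω) (X ω) ∂μ = ∫⁻ ω, ∫⁻ ω', F (U ω) (X ω') ∂μ ∂μ := by
  have hmap := h.map_prod_eq_prod_map_map hU.aemeasurable hX.aemeasurable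
  have e1 : ∫⁻ ω, F (U ω) (X ω) ∂μ
      = ∫⁻ p, Function.uncurry F p ∂(μ.map fun ω => (U ω, X ω)) := by
    rw [lintegral_map hF (hU.prodMk hX)]
    rfl
  have := Measure.isProbabilityMeasure_map (μ := μ) hX.aemeasurable
  rw [e1, hmap, lintegral_prod _ hF.aemeasurable, lintegral_map hF.lintegral_prod_right' hU]
  refine lintegral_congr fun ω => ?_
  exact lintegral_map (hF.comp measurable_prodMk_left) hX

lemma exp_moment
    (Ω : Type) [MeasurableSpace Ω] (μ : Measure Ω) [IsProbabilityMeasure μ]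
    (d k : ℕ) (σ2 : ℝ) (hσ2 : 0 < σ2)
    (X : Ω → Fin d → ℝ) (hXmeas : Measurable X) (hsg : IsSGVec μ X σ2)
    (U : Ω → Fin d → Fin k → ℝ) (hUmeas : Measurable U)
    (horth : ∀ ω, (Matrix.of (U ω))ᵀ * Matrix.of (U ω) = 1)
    (hindep : IndepFun U X μ) (s : ℝ) (hs0 : 0 ≤ s) (hs : s < 1) :
    ∫⁻ ω, ENNReal.ofReal (Real.exp (s / (2 * σ2) * ∑ j, (∑ i, U ω i j * X ω i) ^ 2)) ∂μ
      ≤ ENNReal.ofReal (Real.sqrt (1 / (1 - s)) ^ k) := by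
  set l := Real.sqrt (s / σ2) with hl
  have hl2 : l ^ 2 = s / σ2 := Real.sq_sqrt (by positivity)
  have e1 : ∀ ω, ENNReal.ofReal (Real.exp (s / (2 * σ2) * ∑ j, (∑ i, U ω i j * X ω i) ^ 2))
      = ∫⁻ g, ENNReal.ofReal (Real.exp (∑ j, (l * ∑ i, U ω i j * X ω i) * g j))
        ∂(Measure.pi fun _ : Fin k => gaussianReal 0 1) := by
    intro ω
    rw [gauss_lin, Finset.mul_sum]
    congr 2
    refine Finset.sum_congr rfl fun j _ => ?_
    rw [mul_pow, hl2]
    field_simp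
  simp_rw [e1]
  have hUm : ∀ i j, Measurable fun ω => U ω i j := fun i j => by fun_prop
  have hXm : ∀ i, Measurable fun ω => X ω i := fun i => by fun_prop
  rw [lintegral_lintegral_swap (by
    apply Measurable.aemeasurable
    unfold Function.uncurry
    fun_prop)]
  rw [← gauss_sq s hs]
  refine lintegral_mono fun g => ?_
  rw [indep_lint μ U X hUmeas hXmeas hindep
    (fun u x => ENNReal.ofReal (Real.exp (∑ j, (l * ∑ i, u i j * x i) * g j)))
    (by unfold Function.uncurry; fun_prop)]
  calc _ ≤ ∫⁻ ω, ENNReal.ofReal (Real.exp (∑ i, s / 2 * g i ^ 2)) ∂μ := by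
        refine lintegral_mono fun ω => ?_
        have := sgvec_lint μ σ2 X hsg (fun i => ∑ j, U ω i j * (l * g j))
        rw [norm_emb _ (horth ω)] at this
        have e2 : σ2 * (∑ j, (l * g j) ^ 2) / 2 = ∑ i, s / 2 * g i ^ 2 := by
          simp_rw [mul_pow, hl2]
          rw [← Finset.mul_sum, ← Finset.mul_sum]
          field_simp
        rw [e2] at this
        refine le_trans (le_of_eq ?_) this
        refine lintegral_congr fun ω' => ?_
        congr 2
        simp_rw [Finset.mul_sum, Finset.sum_mul]
        rw [Finset.sum_comm]
        refine Finset.sum_congr rfl fun i _ => Finset.sum_congr rfl fun j _ => ?_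
        ring
    _ = _ := by simp

lemma real_bound (k t : ℝ) (hk : 0 < k) (ht : 0 < t) :
    Real.sqrt ((k + 2 * Real.sqrt (k * t) + 2 * t) / k) ≤ Real.exp (Real.sqrt (k * t) / k) := by
  rw [Real.sqrt_le_left (Real.exp_pos _).le, ← Real.exp_nat_mul]
  have h := Real.quadratic_le_exp_of_nonneg (x := 2 * (Real.sqrt (k * t) / k)) (by positivity)
  have h2 : Real.sqrt (k * t) ^ 2 = k * t := Real.sq_sqrt (by positivity)
  refine le_trans (le_of_eq ?_) (le_trans h (le_of_eq (by norm_num)))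
  field_simp
  rw [h2]
  ring

/-- **Lemma 7 (projection of a sub-Gaussian vector).**
Let `X ∈ ℝ^d` be `SG_d(σ²)`, `k ≤ d`, and let `U ∈ ℝ^{d×k}` have orthonormal columns, be
random, and be independent of `X`.  Then for every `t > 0`,
`P(‖UUᵀX‖² ≥ σ²(k + 2√(kt) + 2t)) ≤ e^{−t}`. -/
theorem subgaussian_projection_tail
    (Ω : Type) [MeasurableSpace Ω] (μ : Measure Ω) [IsProbabilityMeasure μ]
    (d k : ℕ) (hk : k ≤ d) (σ2 : ℝ) (hσ2 : 0 < σ2)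
    (X : Ω → Fin d → ℝ) (hXmeas : Measurable X) (hsg : IsSGVec μ X σ2)
    (U : Ω → Fin d → Fin k → ℝ) (hUmeas : Measurable U)
    (horth : ∀ ω, (Matrix.of (U ω))ᵀ * Matrix.of (U ω) = 1)
    (hindep : IndepFun U X μ)
    (t : ℝ) (ht : 0 < t) :
    μ {ω | σ2 * ((k : ℝ) + 2 * Real.sqrt ((k : ℝ) * t) + 2 * t) ≤
        vnorm ((Matrix.of (U ω) * (Matrix.of (U ω))ᵀ).mulVec (X ω)) ^ 2} ≤
      ENNReal.ofReal (Real.exp (-t)) := by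
  classical
  simp_rw [norm_proj _ (horth _)]
  rcases Nat.eq_zero_or_pos k with rfl | hk0
  · have : {ω | σ2 * (((0 : ℕ) : ℝ) + 2 * Real.sqrt (((0 : ℕ) : ℝ) * t) + 2 * t) ≤
        ∑ j : Fin 0, (∑ i, U ω i j * X ω i) ^ 2} = ∅ := by
      ext ω
      have : 0 < σ2 * (2 * t) := by positivity
      simp
      positivity
    rw [this]
    simp
  have hkr : (0 : ℝ) < k := by exact_mod_cast hk0
  set q := Real.sqrt ((k : ℝ) * t) with hq
  have hq0 : 0 ≤ q := Real.sqrt_nonneg _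
  set x := (k : ℝ) + 2 * q + 2 * t with hx
  have hxk : (k : ℝ) < x := by linarith
  have hx0 : 0 < x := by linarith
  set s := 1 - k / x with hsdef
  have hkx : (k : ℝ) / x < 1 := (div_lt_one hx0).2 hxk
  have hkx0 : (0 : ℝ) < k / x := by positivity
  have hs0 : 0 < s := by linarith
  have hs1 : s < 1 := by linarith
  have hsx : s * x = 2 * q + 2 * t := by
    rw [hsdef, sub_mul, div_mul_cancel₀ _ hx0.ne']; linarith
  have hM := exp_moment Ω μ d k σ2 hσ2 X hXmeas hsg U hUmeas horth hindep s hs0.le hs1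
  have hB : Real.sqrt (1 / (1 - s)) ^ k ≤ Real.exp q := by
    have h1 : 1 / (1 - s) = x / k := by rw [hsdef, sub_sub_cancel, one_div_div]
    rw [h1]
    refine le_trans (pow_le_pow_left₀ (Real.sqrt_nonneg _) (real_bound k t hkr ht) k) ?_
    rw [← Real.exp_nat_mul, ← hq, mul_div_cancel₀ _ hkr.ne']
  have hUm : ∀ i j, Measurable fun ω => U ω i j := fun i j => by fun_prop
  have hXm : ∀ i, Measurable fun ω => X ω i := fun i => by fun_prop
  have hMk := mul_meas_ge_le_lintegral (μ := μ)
    (f := fun ω => ENNReal.ofReal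
      (Real.exp (s / (2 * σ2) * ∑ j, (∑ i, U ω i j * X ω i) ^ 2)))
    (by fun_prop) (ENNReal.ofReal (Real.exp (q + t)))
  have hsub : {ω | σ2 * x ≤ ∑ j, (∑ i, U ω i j * X ω i) ^ 2} ⊆
      {ω | ENNReal.ofReal (Real.exp (q + t)) ≤ ENNReal.ofReal
      (Real.exp (s / (2 * σ2) * ∑ j, (∑ i, U ω i j * X ω i) ^ 2))} := by
    intro ω hω
    simp only [Set.mem_ofPred_eq] at hω ⊢
    apply ENNReal.ofReal_le_ofReal
    apply Real.exp_le_exp.2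
    calc q + t = s / (2 * σ2) * (σ2 * x) := by
          field_simp
          linarith
      _ ≤ _ := by gcongr
  have hfin : ENNReal.ofReal (Real.exp (q + t)) *
      μ {ω | σ2 * x ≤ ∑ j, (∑ i, U ω i j * X ω i) ^ 2} ≤ ENNReal.ofReal (Real.exp q) :=
    le_trans (mul_le_mul_right (measure_mono hsub) _)
      (hMk.trans (hM.trans (ENNReal.ofReal_le_ofReal hB)))
  have hsplit : ENNReal.ofReal (Real.exp (-t)) =
      ENNReal.ofReal (Real.exp q) / ENNReal.ofReal (Real.exp (q + t)) := by
    rw [← ENNReal.ofReal_div_of_pos (Real.exp_pos _), ← Real.exp_sub]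
    congr 2
    ring
  rw [hsplit, ENNReal.le_div_iff_mul_le (Or.inl (by simp [Real.exp_pos]))
    (Or.inl ENNReal.ofReal_ne_top), mul_comm]
  exact hfin
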